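/- Deleting all boxes from all theorems of CC yields an inconsistency: CC proves the existence of a concept R satisfying both ¬¬(R ∈ R) and R ∈ R → □⊥, and erasing the box in the second formula produces, together with the first, the contradictory pair ¬¬(R ∈ R) and ¬(R ∈ R). Formally, the set of box-erasures of theorems of CC is inconsistent over intuitionistic predicate calculus with equality. -/

import Mathlib

/-!
Deep embedding of Weaver's system CC ("Constructive Concepts").

The language is the first-order language of set theory (∈ and =, variables
only as terms) augmented by a unary operator □.  Formulas use de Bruijn
indices for variables.  ⊥ is the defined formula (∀x,y)(x ∈ y) and ¬A
abbreviates A → ⊥.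

CC consists of intuitionistic predicate calculus with equality (presented
in natural-deduction style, with contexts), the modal axiom schemes
(1) A → □A, (2) □(A∧B) ↔ (□A ∧ □B), (3) □(A∨B) ↔ (□A ∨ □B),
(4) □∃xA ↔ ∃x□A, (5) □∀xA ↔ ∀x□A, (6) □(A→B) → (□A → □B),
the deduction rule inferring A from □A (applicable to theorems, i.e. in
the empty context), the extensionality axiom (7), and the comprehension
scheme (8) (∃x)(∀r)(r ∈ x ↔ □A) with x not free in A.
-/

namespace CC

/-- Formulas of CC; variables are de Bruijn indices. -/
inductive Fm : Type
  | mem : ℕ → ℕ → Fm        -- x ∈ y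
  | eq  : ℕ → ℕ → Fm        -- x = y
  | and : Fm → Fm → Fm
  | or  : Fm → Fm → Fm
  | imp : Fm → Fm → Fm
  | all : Fm → Fm
  | ex  : Fm → Fm
  | box : Fm → Fm
  deriving DecidableEq

namespace Fm

/-- ⊥ stands for (∀x,y)(x ∈ y). -/
def bot : Fm := .all (.all (.mem 1 0))

/-- ¬A abbreviates A → ⊥. -/
def neg (A : Fm) : Fm := A.imp bot

/-- A ↔ B abbreviates (A → B) ∧ (B → A). -/
def iff (A B : Fm) : Fm := (A.imp B).and (B.imp A)

/-- Lift a variable: indices ≥ d are incremented. -/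
def liftVar (d n : ℕ) : ℕ := if n < d then n else n + 1

/-- Lift a formula at depth d: free indices ≥ d are incremented. -/
def liftAt (d : ℕ) : Fm → Fm
  | mem a b => mem (liftVar d a) (liftVar d b)
  | eq a b  => eq (liftVar d a) (liftVar d b)
  | and A B => and (A.liftAt d) (B.liftAt d)
  | or A B  => or (A.liftAt d) (B.liftAt d)
  | imp A B => imp (A.liftAt d) (B.liftAt d)
  | all A   => all (A.liftAt (d+1))
  | ex A    => ex (A.liftAt (d+1))
  | box A   => box (A.liftAt d)

/-- Lift a formula (all free indices incremented). -/
def shift : Fm → Fm := liftAt 0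

/-- Substitute variable t for index d (indices above d are lowered). -/
def substVar (d t n : ℕ) : ℕ := if n < d then n else if n = d then t else n - 1

/-- Substitute the variable t for the de Bruijn index d. -/
def subst (d t : ℕ) : Fm → Fm
  | mem a b => mem (substVar d t a) (substVar d t b)
  | eq a b  => eq (substVar d t a) (substVar d t b)
  | and A B => and (A.subst d t) (B.subst d t)
  | or A B  => or (A.subst d t) (B.subst d t)
  | imp A B => imp (A.subst d t) (B.subst d t)
  | all A   => all (A.subst (d+1) (t+1))
  | ex A    => ex (A.subst (d+1) (t+1))
  | box A   => box (A.subst d t)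

end Fm

/-- The extensionality axiom (7): x = y ↔ (∀u)(u ∈ x ↔ u ∈ y)
(universally closed). -/
def extAx : Fm :=
  .all (.all (Fm.iff (.eq 1 0) (.all (Fm.iff (.mem 0 2) (.mem 0 1)))))

/-- Derivability in CC, from a list of hypotheses.  The rules are those of
intuitionistic natural deduction with equality (with ex falso for the
defined ⊥), the modal axioms (1)–(6), the rule inferring A from □A (for
theorems, i.e. with no hypotheses), extensionality, and comprehension.
In `compr`, the formula `A` has de Bruijn index 0 as the fixed variable r;
lifting at 1 guarantees that the comprehension variable x does not occur
freely in A. -/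
inductive Prf : List Fm → Fm → Prop
  | hyp {Γ : List Fm} {A : Fm} : A ∈ Γ → Prf Γ A
  | andI {Γ : List Fm} {A B : Fm} : Prf Γ A → Prf Γ B → Prf Γ (.and A B)
  | andE1 {Γ : List Fm} {A B : Fm} : Prf Γ (.and A B) → Prf Γ A
  | andE2 {Γ : List Fm} {A B : Fm} : Prf Γ (.and A B) → Prf Γ B
  | orI1 {Γ : List Fm} {A B : Fm} : Prf Γ A → Prf Γ (.or A B)
  | orI2 {Γ : List Fm} {A B : Fm} : Prf Γ B → Prf Γ (.or A B)
  | orE {Γ : List Fm} {A B C : Fm} : Prf Γ (.or A B) → Prf (A :: Γ) C → Prf (B :: Γ) C → Prf Γ C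
  | impI {Γ : List Fm} {A B : Fm} : Prf (A :: Γ) B → Prf Γ (.imp A B)
  | impE {Γ : List Fm} {A B : Fm} : Prf Γ (.imp A B) → Prf Γ A → Prf Γ B
  | exfalso {Γ : List Fm} {A : Fm} : Prf Γ Fm.bot → Prf Γ A
  | allI {Γ : List Fm} {A : Fm} : Prf (Γ.map Fm.shift) A → Prf Γ (.all A)
  | allE {Γ : List Fm} {A : Fm} (t : ℕ) : Prf Γ (.all A) → Prf Γ (A.subst 0 t)
  | exI {Γ : List Fm} {A : Fm} (t : ℕ) : Prf Γ (A.subst 0 t) → Prf Γ (.ex A)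
  | exE {Γ : List Fm} {A B : Fm} : Prf Γ (.ex A) → Prf (A :: Γ.map Fm.shift) B.shift → Prf Γ B
  | refl {Γ : List Fm} (t : ℕ) : Prf Γ (.eq t t)
  | eqSubst {Γ : List Fm} {A : Fm} (s t : ℕ) :
      Prf Γ (.eq s t) → Prf Γ (A.subst 0 s) → Prf Γ (A.subst 0 t)
  | ax1 {Γ : List Fm} {A : Fm} : Prf Γ (A.imp (.box A))
  | ax2 {Γ : List Fm} {A B : Fm} : Prf Γ (Fm.iff (.box (.and A B)) (.and (.box A) (.box B)))
  | ax3 {Γ : List Fm} {A B : Fm} : Prf Γ (Fm.iff (.box (.or A B)) (.or (.box A) (.box B)))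
  | ax4 {Γ : List Fm} {A : Fm} : Prf Γ (Fm.iff (.box (.ex A)) (.ex (.box A)))
  | ax5 {Γ : List Fm} {A : Fm} : Prf Γ (Fm.iff (.box (.all A)) (.all (.box A)))
  | ax6 {Γ : List Fm} {A B : Fm} : Prf Γ ((Fm.box (A.imp B)).imp ((Fm.box A).imp (.box B)))
  | boxE {A : Fm} : Prf [] (.box A) → Prf [] A
  | ext {Γ : List Fm} : Prf Γ extAx
  | compr {Γ : List Fm} (A : Fm) :
      Prf Γ (.ex (.all (Fm.iff (.mem 0 1) (.box (A.liftAt 1)))))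


/-- Box-erasure: delete all occurrences of the operator □. -/
def Fm.erase : Fm → Fm
  | .mem a b => .mem a b
  | .eq a b  => .eq a b
  | .and A B => .and A.erase B.erase
  | .or A B  => .or A.erase B.erase
  | .imp A B => .imp A.erase B.erase
  | .all A   => .all A.erase
  | .ex A    => .ex A.erase
  | .box A   => A.erase

/-- Formulas of the language of CC minus the box operator. -/
inductive BoxFree : Fm → Prop
  | mem (a b : ℕ) : BoxFree (.mem a b)
  | eq (a b : ℕ) : BoxFree (.eq a b)
  | and {A B : Fm} : BoxFree A → BoxFree B → BoxFree (.and A B)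
  | or {A B : Fm} : BoxFree A → BoxFree B → BoxFree (.or A B)
  | imp {A B : Fm} : BoxFree A → BoxFree B → BoxFree (.imp A B)
  | all {A : Fm} : BoxFree A → BoxFree (.all A)
  | ex {A : Fm} : BoxFree A → BoxFree (.ex A)

/-- Derivability in pure intuitionistic predicate calculus with equality
(the logic of CC without the modal rules and without the set-theoretic
axioms of CC). -/
inductive PrfI : List Fm → Fm → Prop
  | hyp {Γ : List Fm} {A : Fm} : A ∈ Γ → PrfI Γ A
  | andI {Γ : List Fm} {A B : Fm} : PrfI Γ A → PrfI Γ B → PrfI Γ (.and A B)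
  | andE1 {Γ : List Fm} {A B : Fm} : PrfI Γ (.and A B) → PrfI Γ A
  | andE2 {Γ : List Fm} {A B : Fm} : PrfI Γ (.and A B) → PrfI Γ B
  | orI1 {Γ : List Fm} {A B : Fm} : PrfI Γ A → PrfI Γ (.or A B)
  | orI2 {Γ : List Fm} {A B : Fm} : PrfI Γ B → PrfI Γ (.or A B)
  | orE {Γ : List Fm} {A B C : Fm} :
      PrfI Γ (.or A B) → PrfI (A :: Γ) C → PrfI (B :: Γ) C → PrfI Γ C
  | impI {Γ : List Fm} {A B : Fm} : PrfI (A :: Γ) B → PrfI Γ (.imp A B)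
  | impE {Γ : List Fm} {A B : Fm} : PrfI Γ (.imp A B) → PrfI Γ A → PrfI Γ B
  | exfalso {Γ : List Fm} {A : Fm} : PrfI Γ Fm.bot → PrfI Γ A
  | allI {Γ : List Fm} {A : Fm} : PrfI (Γ.map Fm.shift) A → PrfI Γ (.all A)
  | allE {Γ : List Fm} {A : Fm} (t : ℕ) : PrfI Γ (.all A) → PrfI Γ (A.subst 0 t)
  | exI {Γ : List Fm} {A : Fm} (t : ℕ) : PrfI Γ (A.subst 0 t) → PrfI Γ (.ex A)
  | exE {Γ : List Fm} {A B : Fm} :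
      PrfI Γ (.ex A) → PrfI (A :: Γ.map Fm.shift) B.shift → PrfI Γ B
  | refl {Γ : List Fm} (t : ℕ) : PrfI Γ (.eq t t)
  | eqSubst {Γ : List Fm} {A : Fm} (s t : ℕ) :
      PrfI Γ (.eq s t) → PrfI Γ (A.subst 0 s) → PrfI Γ (A.subst 0 t)

/-! Take the concept `R = {r | □¬(r ∈ r)}`, so that `R ∈ R ↔ □¬(R ∈ R)`. If `¬(R ∈ R)`, then
`□¬(R ∈ R)` by `A → □A`, that is `R ∈ R`; hence `¬¬(R ∈ R)`. If `R ∈ R`, then both `□(R ∈ R)` and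
`□¬(R ∈ R)`, hence `□⊥`. The rule inferring `A` from `□A` applies only to theorems, so it does not
yield `⊥` from the hypothesis `R ∈ R`; erasure, however, turns `R ∈ R → □⊥` into `¬(R ∈ R)`. -/

theorem Fm.subst_liftAt_succ (A : Fm) (d : ℕ) : (A.liftAt (d + 1)).subst d d = A := by
  have substVar_liftVar (d n : ℕ) : substVar d d (liftVar (d + 1) n) = n := by
    grind [substVar, liftVar]
  induction A generalizing d <;> simp_all only [liftAt, subst]

namespace Prf

variable {Γ : List Fm} {A B : Fm}

theorem ex_mono (hA : Prf Γ (.ex A)) (hAB : Prf (A :: Γ.map Fm.shift) B) : Prf Γ (.ex B) :=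
  -- `(.ex B).shift` is `.ex (B.liftAt 1)`, whose body instantiated at `0` is `B` again
  .exE hA (.exI 0 ((B.subst_liftAt_succ 0).symm ▸ hAB))

theorem box_of (hA : Prf Γ A) : Prf Γ (.box A) :=
  .impE .ax1 hA

theorem box_mp (hAB : Prf Γ (.box (A.imp B))) (hA : Prf Γ (.box A)) : Prf Γ (.box B) :=
  .impE (.impE .ax6 hAB) hA

theorem exists_mem_self_iff_box (A : Fm) : Prf Γ (.ex (Fm.iff (.mem 0 0) (.box A))) := by
  have diagonal : Prf (.all (Fm.iff (.mem 0 1) (.box (A.liftAt 1))) :: Γ.map Fm.shift)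
      (Fm.iff (.mem 0 0) (.box ((A.liftAt 1).subst 0 0))) :=
    .allE 0 (.hyp List.mem_cons_self)
  rw [A.subst_liftAt_succ 0] at diagonal
  exact .ex_mono (.compr A) diagonal

theorem neg_neg_of_iff_box_neg (h : Fm.iff A (.box A.neg) ∈ Γ) : Prf Γ A.neg.neg := by
  have hA : Prf (A.neg :: Γ) A :=
    .impE (.andE2 (.hyp (List.mem_cons_of_mem _ h))) (.box_of (.hyp List.mem_cons_self))
  exact .impI (.impE (.hyp List.mem_cons_self) hA)

theorem imp_box_bot_of_iff_box_neg (h : Fm.iff A (.box A.neg) ∈ Γ) :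
    Prf Γ (A.imp (.box Fm.bot)) := by
  have hA : Prf (A :: Γ) A := .hyp List.mem_cons_self
  have box_neg : Prf (A :: Γ) (.box A.neg) :=
    .impE (.andE1 (.hyp (List.mem_cons_of_mem _ h))) hA
  exact .impI (.box_mp box_neg (.box_of hA))

theorem exists_neg_neg_mem_self_and_mem_self_imp_box_bot :
    Prf Γ (.ex (.and (Fm.mem 0 0).neg.neg ((Fm.mem 0 0).imp (.box Fm.bot)))) :=
  .ex_mono (exists_mem_self_iff_box (Fm.mem 0 0).neg)
    (.andI (neg_neg_of_iff_box_neg List.mem_cons_self)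
      (imp_box_bot_of_iff_box_neg List.mem_cons_self))

end Prf

theorem PrfI.bot_of_exists_neg_neg_and_neg {Γ : List Fm} {A : Fm}
    (h : PrfI Γ (.ex (.and A.neg.neg A.neg))) : PrfI Γ Fm.bot := by
  have contradictory : PrfI (.and A.neg.neg A.neg :: Γ.map Fm.shift) (.and A.neg.neg A.neg) :=
    .hyp List.mem_cons_self
  exact .exE h (.impE (.andE1 contradictory) (.andE2 contradictory))

/-- Deleting all boxes from all theorems of CC yields an
inconsistency: the set of box-erasures of theorems of CC is inconsistent
over intuitionistic predicate calculus with equality, i.e. some finite list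
of box-erasures of theorems of CC derives ⊥ in that calculus.  (Indeed CC
proves ∃R with ¬¬(R ∈ R) and R ∈ R → □⊥; erasing boxes gives the
contradictory pair ¬¬(R ∈ R) and ¬(R ∈ R).) -/
theorem box_erasure_of_CC_inconsistent :
    ∃ Γ : List Fm, (∀ B ∈ Γ, ∃ A : Fm, Prf [] A ∧ A.erase = B) ∧
      PrfI Γ Fm.bot := by
  let russell : Fm := .ex (.and (Fm.mem 0 0).neg.neg ((Fm.mem 0 0).imp (.box Fm.bot)))
  refine ⟨[russell.erase], ?_, .bot_of_exists_neg_neg_and_neg (.hyp List.mem_cons_self)⟩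
  intro B hB
  obtain rfl := List.mem_singleton.mp hB
  exact ⟨russell, Prf.exists_neg_neg_mem_self_and_mem_self_imp_box_bot, rfl⟩

end CC
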